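/- arXiv:1501.00363 — 2 statements merged into one kernel-verified Lean document; each statement's English description precedes it below -/
import Mathlib

section
/- Let d ≥ 3 be an integer and ν < 0. Then lim_{a→∞} e^{−a(d−1)} · Σ_{n∈ℕ^d} (Π_{i=1}^d a^{n_i}/n_i!) · exp(ν · n_1 n_2 ⋯ n_d) = d. -/
open Filter

lemma aux_hasSum_pi : ∀ (d : ℕ) (f : Fin d → ℕ → ℝ) (s : Fin d → ℝ)
    (_ : ∀ i n, 0 ≤ f i n) (_ : ∀ i, HasSum (f i) (s i)),
    HasSum (fun n : Fin d → ℕ => ∏ i, f i (n i)) (∏ i, s i) := by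
  intro d
  induction d with
  | zero =>
    intro f s _ _
    simpa using hasSum_unique (fun n : Fin 0 → ℕ => ∏ i, f i (n i))
  | succ d ih =>
    intro f s hf hs
    have h1 := ih (fun i => f i.succ) (fun i => s i.succ) (fun i n => hf _ n) (fun i => hs _)
    have h0 := hs 0
    have h3 : Summable (fun x : ℕ × (Fin d → ℕ) => f 0 x.1 * ∏ i, f (Fin.succ i) (x.2 i)) :=
      Summable.mul_of_nonneg (f := f 0) (g := fun y : Fin d → ℕ => ∏ i, f (Fin.succ i) (y i))
        h0.summable h1.summable (fun n => hf 0 n)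
        (fun n => Finset.prod_nonneg (fun i _ => hf _ _))
    have h2 : HasSum (fun x : ℕ × (Fin d → ℕ) => f 0 x.1 * ∏ i, f (Fin.succ i) (x.2 i))
      (s 0 * ∏ i, s (Fin.succ i)) :=
      HasSum.mul (f := f 0) (g := fun y : Fin d → ℕ => ∏ i, f (Fin.succ i) (y i)) h0 h1 h3
    rw [Fin.prod_univ_succ]
    rw [← (Fin.consEquiv (fun _ : Fin (d+1) => ℕ)).hasSum_iff]
    refine Eq.mpr (congrArg (fun F => HasSum F _) (funext ?_)) h2
    intro x
    simp [Fin.prod_univ_succ, Fin.consEquiv]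

lemma aux_exp (x : ℝ) : HasSum (fun n : ℕ => x ^ n / (n.factorial : ℝ)) (Real.exp x) := by
  rw [Real.exp_eq_exp_ℝ]
  exact NormedSpace.expSeries_div_hasSum_exp x

lemma aux_hasSum_exp (d : ℕ) (x : Fin d → ℝ) (hx : ∀ i, 0 ≤ x i) :
    HasSum (fun n : Fin d → ℕ => ∏ i, x i ^ (n i) / ((n i).factorial : ℝ))
      (Real.exp (∑ i, x i)) := by
  rw [Real.exp_sum]
  exact aux_hasSum_pi d (fun i n => x i ^ n / (n.factorial : ℝ)) _
    (fun i n => div_nonneg (pow_nonneg (hx i) n) (by positivity)) (fun i => aux_exp _)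

lemma aux_hasSum_pos (d : ℕ) (a : ℝ) (ha : 0 ≤ a) :
    HasSum (fun n : Fin d → ℕ => ∏ i, if n i = 0 then (0:ℝ) else a ^ (n i) / ((n i).factorial : ℝ))
      ((Real.exp a - 1) ^ d) := by
  have h : HasSum (fun n : ℕ => if n = 0 then (0:ℝ) else a ^ n / (n.factorial : ℝ))
      (Real.exp a - 1) := by
    have := (aux_exp a).sub (hasSum_ite_eq (0:ℕ) (1:ℝ))
    refine Eq.mpr (congrArg (fun F => HasSum F _) (funext ?_)) this
    intro n
    by_cases hn : n = 0 <;> simp [hn]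
  have := aux_hasSum_pi d (fun _ n => if n = 0 then (0:ℝ) else a ^ n / (n.factorial : ℝ))
    (fun _ => Real.exp a - 1) (fun i n => by positivity) (fun _ => h)
  simpa using this

/-- weighted sum with two tilted coordinates -/
lemma aux_tilt (d : ℕ) (a : ℝ) (ha : 0 ≤ a) (i j : Fin d) (hij : i ≠ j) :
    HasSum (fun n : Fin d → ℕ => (∏ k, a ^ (n k) / ((n k).factorial : ℝ)) *
        Real.exp (a / 4 - 2 * n i - 2 * n j))
      (Real.exp (a / 4 + a * ((d:ℝ) - 2 + 2 * Real.exp (-2)))) := by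
  set x : Fin d → ℝ := fun k => a * ((if k = i then Real.exp (-2) else 1) *
    (if k = j then Real.exp (-2) else 1)) with hx
  have hx0 : ∀ k, 0 ≤ x k := fun k => by
    simp only [hx]; positivity
  have h := (aux_hasSum_exp d x hx0).mul_left (Real.exp (a/4))
  have hs : ∑ k, x k = a * ((d:ℝ) - 2 + 2 * Real.exp (-2)) := by
    simp only [hx]
    rw [← Finset.mul_sum]
    congr 1
    have : ∀ k, ((if k = i then Real.exp (-2) else 1) * (if k = j then Real.exp (-2) else 1))
      = 1 + (if k = i then Real.exp (-2) - 1 else 0) + (if k = j then Real.exp (-2) - 1 else 0) := by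
      intro k
      by_cases h1 : k = i
      · have : k ≠ j := fun h => hij (h1.symm.trans h)
        simp [h1, hij]
      · by_cases h2 : k = j
        · simp [h2, hij.symm]
        · simp [h1, h2]
    rw [Finset.sum_congr rfl (fun k _ => this k)]
    simp [Finset.sum_add_distrib]
    ring
  rw [Real.exp_add, ← hs]
  refine Eq.mpr (congrArg (fun F => HasSum F _) (funext ?_)) h
  intro n
  have hp : ∏ k, x k ^ (n k) / ((n k).factorial : ℝ)
      = (∏ k, a ^ (n k) / ((n k).factorial : ℝ)) * (Real.exp (-2) ^ n i * Real.exp (-2) ^ n j) := by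
    have : ∀ k, x k ^ (n k) / ((n k).factorial : ℝ) = a ^ (n k) / ((n k).factorial : ℝ) *
      ((if k = i then Real.exp (-2) ^ (n k) else 1) * (if k = j then Real.exp (-2) ^ (n k) else 1)) := by
      intro k
      simp only [hx, mul_pow, ite_pow, one_pow]
      ring
    rw [Finset.prod_congr rfl (fun k _ => this k), Finset.prod_mul_distrib, Finset.prod_mul_distrib]
    simp
  rw [hp, ← Real.exp_nat_mul, ← Real.exp_nat_mul, ← Real.exp_add, mul_left_comm, ← Real.exp_add]
  congr 2
  ring

/-- pointwise bound -/
lemma aux_bound (d : ℕ) (hd : 3 ≤ d) (ν : ℝ) (hν : ν < 0) (a : ℝ) (ha : 16 ≤ a)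
    (n : Fin d → ℕ) (hn : ∀ i, n i ≠ 0) :
    Real.exp (ν * ∏ i, (n i : ℝ)) ≤ Real.exp (ν * (a / 16) ^ 2) +
      ∑ p : Fin d × Fin d, if p.1 ≠ p.2 then Real.exp (a / 4 - 2 * n p.1 - 2 * n p.2) else 0 := by
  have hn1 : ∀ i, (1:ℝ) ≤ n i := fun i => by exact_mod_cast Nat.one_le_iff_ne_zero.mpr (hn i)
  have hnn : ∀ p ∈ (Finset.univ : Finset (Fin d × Fin d)), 0 ≤
    (if p.1 ≠ p.2 then Real.exp (a / 4 - 2 * n p.1 - 2 * n p.2) else 0) := fun p _ => by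
      split_ifs <;> positivity
  by_cases h : ∃ i j, i ≠ j ∧ (n i : ℝ) ≤ a / 16 ∧ (n j : ℝ) ≤ a / 16
  · obtain ⟨i, j, hij, hi, hj⟩ := h
    have h1 := Finset.single_le_sum hnn (Finset.mem_univ (i, j))
    simp only [ne_eq, hij, not_false_eq_true, if_true] at h1
    have h2 : (1:ℝ) ≤ Real.exp (a / 4 - 2 * n i - 2 * n j) :=
      Real.one_le_exp (by linarith)
    have h3 : Real.exp (ν * ∏ i, (n i : ℝ)) ≤ 1 := by
      apply Real.exp_le_one_iff.mpr
      exact mul_nonpos_of_nonpos_of_nonneg hν.le (Finset.prod_nonneg (fun i _ => by positivity))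
    have := Real.exp_pos (ν * (a / 16) ^ 2)
    simp only [ne_eq] at *
    linarith
  · push Not at h
    have key : (a/16)^2 ≤ ∏ i, (n i : ℝ) := by
      obtain ⟨i, j, hij, hi, hj⟩ : ∃ i j : Fin d, i ≠ j ∧ a / 16 ≤ n i ∧ a / 16 ≤ n j := by
        let z : Fin d := ⟨0, by omega⟩
        let o : Fin d := ⟨1, by omega⟩
        let t : Fin d := ⟨2, by omega⟩
        have hzo : z ≠ o := by simp [z, o]
        have hzt : z ≠ t := by simp [z, t]
        have hot : o ≠ t := by simp [o, t]
        by_cases h0 : (n z : ℝ) ≤ a/16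
        · exact ⟨o, t, hot, (h z o hzo h0).le, (h z t hzt h0).le⟩
        · by_cases h1 : (n o : ℝ) ≤ a/16
          · exact ⟨z, t, hzt, (not_le.mp h0).le, (h o t hot h1).le⟩
          · exact ⟨z, o, hzo, (not_le.mp h0).le, (not_le.mp h1).le⟩
      have hsub : ∏ k ∈ ({i, j} : Finset (Fin d)), (n k : ℝ) ≤ ∏ k, (n k : ℝ) :=
        Finset.prod_le_prod_of_subset_of_one_le (Finset.subset_univ _)
          (fun k _ => by positivity) (fun k _ _ => hn1 k)
      rw [Finset.prod_pair hij] at hsub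
      have : (a/16) * (a/16) ≤ n i * n j := mul_le_mul hi hj (by linarith) (by positivity)
      nlinarith
    have h1 : Real.exp (ν * ∏ i, (n i : ℝ)) ≤ Real.exp (ν * (a / 16) ^ 2) :=
      Real.exp_le_exp.mpr (mul_le_mul_of_nonpos_left key hν.le)
    have := Finset.sum_nonneg hnn
    linarith

noncomputable def auxErr (d : ℕ) (ν a : ℝ) : ℝ :=
  Real.exp (a + ν * (a / 16) ^ 2) +
    ∑ p : Fin d × Fin d, if p.1 ≠ p.2 then Real.exp (a * (2 * Real.exp (-2) - 3 / 4)) else 0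

lemma aux_err_tendsto (d : ℕ) (ν : ℝ) (hν : ν < 0) :
    Tendsto (fun a => auxErr d ν a) atTop (nhds 0) := by
  unfold auxErr
  have h1 : Tendsto (fun a : ℝ => Real.exp (a + ν * (a / 16) ^ 2)) atTop (nhds 0) := by
    apply Real.tendsto_exp_atBot.comp
    have e : (fun a : ℝ => a + ν * (a / 16) ^ 2) = fun a => a * (1 + (ν / 256) * a) := by
      funext a; ring
    rw [e]
    apply Tendsto.atTop_mul_atBot₀ tendsto_id
    exact tendsto_atBot_add_const_left _ _ (tendsto_id.const_mul_atTop_of_neg (by linarith))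
  have he : Real.exp (-2) ≤ 1 / 4 := by
    have h2 : (2:ℝ) ≤ Real.exp 1 := by have := Real.add_one_le_exp (1:ℝ); linarith
    have h3 : Real.exp 2 = Real.exp 1 * Real.exp 1 := by rw [← Real.exp_add]; norm_num
    rw [Real.exp_neg, ← one_div]
    apply one_div_le_one_div_of_le (by norm_num)
    rw [h3]; nlinarith
  have h2 : Tendsto (fun a : ℝ => Real.exp (a * (2 * Real.exp (-2) - 3 / 4))) atTop (nhds 0) :=
    Real.tendsto_exp_atBot.comp (tendsto_id.atTop_mul_const_of_neg (by linarith))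
  have h3 : Tendsto (fun a : ℝ => ∑ p : Fin d × Fin d, if p.1 ≠ p.2 then
      Real.exp (a * (2 * Real.exp (-2) - 3 / 4)) else 0) atTop
      (nhds (∑ p : Fin d × Fin d, 0)) := by
    apply tendsto_finsetSum
    intro p _
    split_ifs
    · exact h2
    · exact tendsto_const_nhds
  simpa using h1.add h3

lemma aux_main_term (d : ℕ) (a : ℝ) :
    Real.exp (-a * ((d : ℝ) - 1)) * (Real.exp (d * a) - (Real.exp a - 1) ^ d)
      = ∑ k ∈ Finset.range d, (1 - Real.exp (-a)) ^ k := by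
  have hu : Real.exp a * Real.exp (-a) = 1 := by rw [← Real.exp_add]; simp
  have h1 : Real.exp (-a * ((d : ℝ) - 1)) = Real.exp a * Real.exp (-a) ^ d := by
    rw [← Real.exp_nat_mul, ← Real.exp_add]; congr 1; ring
  have hg := mul_neg_geom_sum (1 - Real.exp (-a)) d
  have h2 : Real.exp (-a) ^ d * Real.exp a ^ d = 1 := by
    rw [← mul_pow, mul_comm, hu, one_pow]
  have h3 : Real.exp (-a) ^ d * (Real.exp a - 1) ^ d = (1 - Real.exp (-a)) ^ d := by
    rw [← mul_pow, mul_sub, mul_comm (Real.exp (-a)), hu, mul_one]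
  rw [h1, Real.exp_nat_mul, mul_assoc, mul_sub (Real.exp (-a) ^ d), h2, h3, ← hg,
    sub_sub_cancel, ← mul_assoc, hu, one_mul]

lemma aux_decomp (d : ℕ) (hd : 3 ≤ d) (ν : ℝ) (hν : ν < 0) (a : ℝ) (ha : 16 ≤ a) :
    ∃ r : ℝ, 0 ≤ r ∧ r ≤ auxErr d ν a ∧
      Real.exp (-a * ((d : ℝ) - 1)) *
          ∑' n : Fin d → ℕ,
            (∏ i, a ^ (n i) / ((n i).factorial : ℝ)) * Real.exp (ν * ∏ i, (n i : ℝ))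
       = ∑ k ∈ Finset.range d, (1 - Real.exp (-a)) ^ k + r := by
  have ha0 : 0 ≤ a := by linarith
  set w : (Fin d → ℕ) → ℝ := fun n => ∏ i, a ^ (n i) / ((n i).factorial : ℝ) with hw
  have hw0 : ∀ n, 0 ≤ w n := fun n => Finset.prod_nonneg (fun i _ => by positivity)
  set g : (Fin d → ℕ) → ℝ :=
    fun n => ∏ i, if n i = 0 then (0:ℝ) else a ^ (n i) / ((n i).factorial : ℝ) with hg
  have hg0 : ∀ n, 0 ≤ g n := fun n => Finset.prod_nonneg (fun i _ => by positivity)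
  have hgz : ∀ n : Fin d → ℕ, (∃ i, n i = 0) → g n = 0 := by
    rintro n ⟨i, hi⟩
    exact Finset.prod_eq_zero (Finset.mem_univ i) (by simp [hi])
  have hgw : ∀ n : Fin d → ℕ, (∀ i, n i ≠ 0) → g n = w n := by
    intro n hn
    exact Finset.prod_congr rfl (fun i _ => by simp [hn i])
  have hW : HasSum w (Real.exp (d * a)) := by
    have h := aux_hasSum_exp d (fun _ => a) (fun _ => ha0)
    have e : ∑ _i : Fin d, a = d * a := by simp
    rw [e] at h
    exact h
  have hG : HasSum g ((Real.exp a - 1) ^ d) := aux_hasSum_pos d a ha0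
  set R : (Fin d → ℕ) → ℝ := fun n => g n * Real.exp (ν * ∏ i, (n i : ℝ)) with hR
  have hR0 : ∀ n, 0 ≤ R n := fun n => mul_nonneg (hg0 n) (Real.exp_pos _).le
  set B : (Fin d → ℕ) → ℝ := fun n => w n * Real.exp (ν * (a / 16) ^ 2) +
      ∑ p : Fin d × Fin d, if p.1 ≠ p.2 then
        w n * Real.exp (a / 4 - 2 * n p.1 - 2 * n p.2) else 0 with hB
  have hRB : ∀ n, R n ≤ B n := by
    intro n
    by_cases hn : ∀ i, n i ≠ 0
    · have := mul_le_mul_of_nonneg_left (aux_bound d hd ν hν a ha n hn) (hw0 n)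
      simp only [hR, hB, hgw n hn]
      rw [mul_add, Finset.mul_sum] at this
      simpa only [mul_ite, mul_zero] using this
    · push Not at hn
      simp only [hR, hgz n hn, zero_mul, hB]
      apply add_nonneg (mul_nonneg (hw0 n) (Real.exp_pos _).le)
      apply Finset.sum_nonneg
      intro p _
      split_ifs
      · exact mul_nonneg (hw0 n) (Real.exp_pos _).le
      · exact le_rfl
  have hBs : HasSum B (Real.exp (d * a) * Real.exp (ν * (a / 16) ^ 2) +
      ∑ p : Fin d × Fin d, if p.1 ≠ p.2 then
        Real.exp (a / 4 + a * ((d:ℝ) - 2 + 2 * Real.exp (-2))) else 0) := by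
    apply (hW.mul_right _).add
    apply hasSum_sum
    intro p _
    split_ifs with h
    · exact aux_tilt d a ha0 p.1 p.2 h
    · exact hasSum_zero
  have hRs : Summable R := Summable.of_nonneg_of_le hR0 hRB hBs.summable
  have hsum : ∀ n, w n * Real.exp (ν * ∏ i, (n i : ℝ)) = w n - g n + R n := by
    intro n
    by_cases hn : ∀ i, n i ≠ 0
    · simp only [hR, hgw n hn]; ring
    · push Not at hn
      obtain ⟨i, hi⟩ := hn
      have : ∏ i, (n i : ℝ) = 0 := Finset.prod_eq_zero (Finset.mem_univ i) (by simp [hi])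
      simp [hR, hgz n ⟨i, hi⟩, this]
  refine ⟨Real.exp (-a * ((d : ℝ) - 1)) * ∑' n, R n,
    mul_nonneg (Real.exp_pos _).le (tsum_nonneg hR0), ?_, ?_⟩
  · have h1 : ∑' n, R n ≤ _ := hasSum_le hRB hRs.hasSum hBs
    refine (mul_le_mul_of_nonneg_left h1 (Real.exp_pos _).le).trans (le_of_eq ?_)
    unfold auxErr
    rw [mul_add, Finset.mul_sum]
    congr 1
    · rw [← Real.exp_add, ← Real.exp_add]; congr 1; ring
    · apply Finset.sum_congr rfl
      intro p _
      rw [mul_ite, mul_zero, ← Real.exp_add]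
      congr 2; ring
  · rw [tsum_congr hsum, ((hW.sub hG).add hRs.hasSum).tsum_eq, mul_add, aux_main_term]

/-- `e^{-a(d-1)} Σ_{n∈ℕ^d} (Π a^{n_i}/n_i!) exp(ν n_1⋯n_d) → d` as `a → ∞`. -/
theorem denominator_series_limit
    (d : ℕ) (hd : 3 ≤ d) (ν : ℝ) (hν : ν < 0) :
    Tendsto (fun a : ℝ =>
        Real.exp (-a * ((d : ℝ) - 1)) *
          ∑' n : Fin d → ℕ,
            (∏ i, a ^ (n i) / ((n i).factorial : ℝ)) * Real.exp (ν * ∏ i, (n i : ℝ)))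
      atTop (nhds (d : ℝ)) := by
  have hm : Tendsto (fun a : ℝ => ∑ k ∈ Finset.range d, (1 - Real.exp (-a)) ^ k) atTop
      (nhds (d:ℝ)) := by
    have h0 : Tendsto (fun a : ℝ => 1 - Real.exp (-a)) atTop (nhds 1) := by
      have := Real.tendsto_exp_neg_atTop_nhds_zero.const_sub 1
      simpa using this
    have : Tendsto (fun a : ℝ => ∑ k ∈ Finset.range d, (1 - Real.exp (-a)) ^ k) atTop
      (nhds (∑ k ∈ Finset.range d, (1:ℝ) ^ k)) :=
      tendsto_finsetSum _ (fun k _ => h0.pow k)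
    simpa using this
  have hu := hm.add (aux_err_tendsto d ν hν)
  rw [add_zero] at hu
  refine tendsto_of_tendsto_of_tendsto_of_le_of_le' hm hu ?_ ?_
  · filter_upwards [eventually_ge_atTop 16] with a ha
    obtain ⟨r, h0, _, h⟩ := aux_decomp d hd ν hν a ha
    rw [h]; linarith
  · filter_upwards [eventually_ge_atTop 16] with a ha
    obtain ⟨r, _, h1, h⟩ := aux_decomp d hd ν hν a ha
    rw [h]; linarith
end

section
/- Let d ≥ 3 and 1 ≤ k ≤ d−1 be integers and ν < 0. For n ∈ ℕ^d define Q_{d−k,d}(n) = Σ_{F⊆{1,…,d−k}} Π_{l∈{1,…,d}∖F} n_l, where the sum is over all subsets F of {1,…,d−k} (including the empty set). Then lim_{a→∞} e^{−a(d−1)} · Σ_{n∈ℕ^d} (Π_{i=1}^d a^{n_i}/n_i!) · exp(ν · Q_{d−k,d}(n)) = k. -/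
open Filter

namespace NumSeries

lemma hasSum_mul_aux {α β : Type} (f : α → ℝ) (g : β → ℝ) (s t : ℝ) (hf : ∀ x, 0 ≤ f x)
    (hg : ∀ x, 0 ≤ g x) (hs : HasSum f s) (ht : HasSum g t) :
    HasSum (fun x : α × β => f x.1 * g x.2) (s * t) :=
  hs.mul ht (hs.summable.mul_of_nonneg ht.summable hf hg)

lemma hasSum_pi (d : ℕ) (f : Fin d → ℕ → ℝ) (s : Fin d → ℝ)
    (h0 : ∀ i n, 0 ≤ f i n) (hs : ∀ i, HasSum (f i) (s i)) :
    HasSum (fun n : Fin d → ℕ => ∏ i, f i (n i)) (∏ i, s i) := by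
  induction d with
  | zero =>
    simpa using hasSum_unique (fun n : Fin 0 → ℕ => ∏ i, f i (n i))
  | succ d ih =>
    have h1 := ih (fun i => f i.succ) (fun i => s i.succ) (fun i n => h0 _ _) (fun i => hs _)
    have h2 := hasSum_mul_aux _ _ _ _ (h0 0) (fun n : Fin d → ℕ =>
      Finset.prod_nonneg fun i _ => h0 i.succ (n i)) (hs 0) h1
    rw [Fin.prod_univ_succ, ← (Fin.consEquiv (fun _ : Fin (d+1) => ℕ)).hasSum_iff]
    convert! h2 using 1
    ext x
    simp [Fin.consEquiv, Fin.prod_univ_succ]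

lemma hasSum_exp' (a : ℝ) :
    HasSum (fun n : ℕ => a ^ n / (n.factorial : ℝ)) (Real.exp a) := by
  rw [Real.exp_eq_exp_ℝ]
  exact NormedSpace.expSeries_div_hasSum_exp a

lemma hasSum_exp_ne (a : ℝ) :
    HasSum (fun n : ℕ => a ^ n / (n.factorial : ℝ) * (if n = 0 then 0 else 1))
      (Real.exp a - 1) := by
  have h := (hasSum_exp' a).sub (hasSum_ite_eq (0 : ℕ) (1 : ℝ))
  convert! h using 1
  ext n
  by_cases hn : n = 0 <;> simp [hn]

lemma hasSum_w (d : ℕ) (a : ℝ) (ha : 0 ≤ a) :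
    HasSum (fun n : Fin d → ℕ => ∏ i, a ^ (n i) / ((n i).factorial : ℝ))
      (Real.exp (a * d)) := by
  have h := hasSum_pi d (fun _ n => a ^ n / (n.factorial : ℝ)) (fun _ => Real.exp a)
    (fun i n => by positivity) (fun _ => hasSum_exp' a)
  convert! h using 1
  rw [← Real.exp_sum]; simp [mul_comm]

lemma hasSum_w_ne (d k : ℕ) (hk : k ≤ d) (a : ℝ) (ha : 0 ≤ a) :
    HasSum (fun n : Fin d → ℕ => (∏ i, a ^ (n i) / ((n i).factorial : ℝ)) *
        ∏ i : Fin d, (if (i : ℕ) < d - k then 1 else if n i = 0 then 0 else 1))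
      (Real.exp a ^ (d - k) * (Real.exp a - 1) ^ k) := by
  have h := hasSum_pi d (fun i n => a ^ n / (n.factorial : ℝ) *
      (if (i : ℕ) < d - k then 1 else if n = 0 then 0 else 1))
    (fun i => if (i : ℕ) < d - k then Real.exp a else Real.exp a - 1)
    (fun i n => by
      have : (0 : ℝ) ≤ if (i : ℕ) < d - k then 1 else if n = 0 then 0 else 1 := by
        split_ifs <;> norm_num
      positivity)
    (fun i => by
      by_cases hi : (i : ℕ) < d - k
      · simpa [hi] using hasSum_exp' a
      · simpa only [hi, if_false] using hasSum_exp_ne a)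
  convert! h using 1
  · ext n; rw [Finset.prod_mul_distrib]
  · have : ∏ i : Fin d, (if (i : ℕ) < d - k then Real.exp a else Real.exp a - 1)
      = ∏ i ∈ Finset.range d, (if i < d - k then Real.exp a else Real.exp a - 1) :=
      Fin.prod_univ_eq_prod_range (fun i => if i < d - k then Real.exp a else Real.exp a - 1) d
    rw [this]
    obtain ⟨m, rfl⟩ := Nat.exists_eq_add_of_le' hk
    rw [Nat.add_sub_cancel, Finset.prod_range_add]
    congr 1
    · rw [Finset.prod_congr rfl (g := fun _ => Real.exp a)
        (fun x hx => if_pos (Finset.mem_range.1 hx))]; simp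
    · simp

lemma hasSum_w_pair (d : ℕ) (a : ℝ) (ha : 0 ≤ a) (i j : Fin d) (hij : i ≠ j) :
    HasSum (fun n : Fin d → ℕ => (∏ i, a ^ (n i) / ((n i).factorial : ℝ)) *
        (Real.exp (2 * (a / 10 - n i)) * Real.exp (2 * (a / 10 - n j))))
      (Real.exp (a * d - 2 * a + 2 * a * Real.exp (-2) + 2 * a / 5)) := by
  have h := hasSum_pi d (fun l n => (a * (if l ∈ ({i, j} : Finset (Fin d)) then Real.exp (-2)
        else 1)) ^ n / (n.factorial : ℝ))
    (fun l => Real.exp (a * (if l ∈ ({i, j} : Finset (Fin d)) then Real.exp (-2) else 1)))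
    (fun i n => by
      have : (0 : ℝ) ≤ if i ∈ ({i, j} : Finset (Fin d)) then Real.exp (-2) else 1 := by
        split_ifs <;> positivity
      positivity)
    (fun _ => hasSum_exp' _)
  have h' := h.mul_right (Real.exp (2 * a / 5))
  convert! h' using 1
  · ext n
    simp only [mul_pow, mul_div_right_comm]
    rw [Finset.prod_mul_distrib, mul_assoc]
    congr 1
    simp only [ite_pow, one_pow]
    rw [Finset.prod_ite_mem, Finset.univ_inter, Finset.prod_pair hij, ← Real.exp_nat_mul,
      ← Real.exp_nat_mul, ← Real.exp_add, ← Real.exp_add, ← Real.exp_add]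
    congr 1; ring
  · rw [← Real.exp_sum, ← Real.exp_add, ← Finset.mul_sum]
    have : ∑ l : Fin d, (if l ∈ ({i, j} : Finset (Fin d)) then Real.exp (-2) else 1)
        = d - 2 + 2 * Real.exp (-2) := by
      have : ∀ l : Fin d, (if l ∈ ({i, j} : Finset (Fin d)) then Real.exp (-2) else 1)
        = 1 + (if l ∈ ({i, j} : Finset (Fin d)) then Real.exp (-2) - 1 else 0) := by
        intro l; split_ifs <;> ring
      rw [Finset.sum_congr rfl (fun l _ => this l), Finset.sum_add_distrib, Finset.sum_ite_mem,
        Finset.univ_inter, Finset.sum_pair hij]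
      simp; ring
    rw [this]; congr 1; ring

lemma Q_eq (d m : ℕ) (n : Fin d → ℕ) :
    ∑ F ∈ (Finset.univ.filter (fun i : Fin d => (i : ℕ) < m)).powerset,
      ∏ l ∈ Finset.univ \ F, (n l : ℝ) =
    ∏ l : Fin d, (if (l : ℕ) < m then (n l : ℝ) + 1 else n l) := by
  set T := Finset.univ.filter (fun i : Fin d => (i : ℕ) < m) with hT
  have h1 : ∀ F ∈ T.powerset, ∏ l ∈ Finset.univ \ F, (n l : ℝ)
      = (∏ l ∈ Finset.univ \ T, (n l : ℝ)) * ∏ l ∈ T \ F, (n l : ℝ) := by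
    intro F hF
    rw [Finset.mem_powerset] at hF
    rw [← Finset.prod_union]
    · congr 1
      ext x
      have := @hF x
      simp only [Finset.mem_sdiff, Finset.mem_union, Finset.mem_univ, true_and]
      tauto
    · rw [Finset.disjoint_left]; intro x; simp only [Finset.mem_sdiff]; tauto
  rw [Finset.sum_congr rfl h1, ← Finset.mul_sum]
  have h2 := Finset.prod_add (fun _ => (1 : ℝ)) (fun l => (n l : ℝ)) T
  simp only [Finset.prod_const_one, one_mul] at h2
  rw [← h2, ← Finset.prod_sdiff (Finset.subset_univ T)]
  congr 1
  · refine Finset.prod_congr rfl fun l hl => ?_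
    have : ¬ (l : ℕ) < m := by simpa [hT] using hl
    simp [this]
  · refine Finset.prod_congr rfl fun l hl => ?_
    have : (l : ℕ) < m := by simpa [hT] using hl
    simp [this, add_comm]

lemma pair_le_prod (d : ℕ) (x : Fin d → ℝ) (hx : ∀ l, 1 ≤ x l) (i j : Fin d) (hij : i ≠ j) :
    x i * x j ≤ ∏ l, x l := by
  rw [← Finset.prod_sdiff (Finset.subset_univ {i, j}), Finset.prod_pair hij]
  have h1 : (1 : ℝ) ≤ ∏ l ∈ Finset.univ \ {i, j}, x l := by
    have := Finset.prod_le_prod (s := Finset.univ \ {i, j}) (f := fun _ => (1 : ℝ)) (g := x)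
      (fun _ _ => zero_le_one) (fun l _ => hx l)
    simpa using this
  have := hx i
  have := hx j
  have : 0 ≤ x i * x j := by positivity
  nlinarith

/-- three coordinates: two small or two large. -/
lemma exp_bound (ν t : ℝ) (hν : ν < 0) (ht : 0 ≤ t) (P u v w : ℝ) (hP : 0 ≤ P)
    (huv : u * v ≤ P) (huw : u * w ≤ P) (hvw : v * w ≤ P) (u' v' w' : ℝ)
    (hu : u' ≤ u) (hv : v' ≤ v) (hw : w' ≤ w) :
    Real.exp (ν * P) ≤ Real.exp (ν * t ^ 2)
      + Real.exp (2 * (t - u')) * Real.exp (2 * (t - v'))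
      + Real.exp (2 * (t - u')) * Real.exp (2 * (t - w'))
      + Real.exp (2 * (t - v')) * Real.exp (2 * (t - w')) := by
  have big : ∀ x y : ℝ, t ≤ x → t ≤ y → x * y ≤ P → Real.exp (ν * P) ≤ Real.exp (ν * t ^ 2) := by
    intro x y hx hy hxy
    apply Real.exp_le_exp.2
    have : t ^ 2 ≤ x * y := by nlinarith
    nlinarith
  have small : ∀ x y : ℝ, x ≤ t → y ≤ t → 
      Real.exp (ν * P) ≤ Real.exp (2 * (t - x)) * Real.exp (2 * (t - y)) := by
    intro x y hx hy
    rw [← Real.exp_add]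
    apply Real.exp_le_exp.2
    nlinarith
  have p0 := Real.exp_pos (ν * t ^ 2)
  have p1 := mul_pos (Real.exp_pos (2 * (t - u'))) (Real.exp_pos (2 * (t - v')))
  have p2 := mul_pos (Real.exp_pos (2 * (t - u'))) (Real.exp_pos (2 * (t - w')))
  have p3 := mul_pos (Real.exp_pos (2 * (t - v'))) (Real.exp_pos (2 * (t - w')))
  rcases le_total t u' with h1 | h1 <;> rcases le_total t v' with h2 | h2 <;>
    rcases le_total t w' with h3 | h3
  · linarith [big u v (by linarith) (by linarith) huv]
  · linarith [big u v (by linarith) (by linarith) huv]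
  · linarith [big u w (by linarith) (by linarith) huw]
  · linarith [small v' w' h2 h3]
  · linarith [big v w (by linarith) (by linarith) hvw]
  · linarith [small u' w' h1 h3]
  · linarith [small u' v' h1 h2]
  · linarith [small u' v' h1 h2]

lemma main_lim (d k : ℕ) (hk : k ≤ d) :
    Tendsto (fun a : ℝ => Real.exp (-a * ((d : ℝ) - 1)) *
      (Real.exp (a * d) - Real.exp a ^ (d - k) * (Real.exp a - 1) ^ k))
      atTop (nhds (k : ℝ)) := by
  have h : ∀ a : ℝ, Real.exp (-a * ((d : ℝ) - 1)) *
      (Real.exp (a * d) - Real.exp a ^ (d - k) * (Real.exp a - 1) ^ k)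
      = ∑ j ∈ Finset.range k, (1 - Real.exp (-a)) ^ j := by
    intro a
    have hg := mul_neg_geom_sum (1 - Real.exp (-a)) k
    have e1 : Real.exp (-a) * Real.exp a = 1 := by rw [← Real.exp_add]; simp
    have e2 : Real.exp (-a * ((d : ℝ) - 1)) = Real.exp (-a) ^ d * Real.exp a := by
      rw [← Real.exp_nat_mul, ← Real.exp_add]; congr 1; ring
    have e3 : Real.exp (a * d) = Real.exp a ^ d := by
      rw [← Real.exp_nat_mul]; congr 1; ring
    have e4 : 1 - Real.exp (-a) = Real.exp (-a) * (Real.exp a - 1) := by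
      rw [mul_sub, e1]; ring
    have e5 : (Real.exp (-a)) ^ d * Real.exp a ^ d = 1 := by rw [← mul_pow, e1, one_pow]
    have e6 : (Real.exp (-a)) ^ d * (Real.exp a ^ (d - k) * (Real.exp a - 1) ^ k)
        = (1 - Real.exp (-a)) ^ k := by
      obtain ⟨m, rfl⟩ := Nat.exists_eq_add_of_le' hk
      rw [Nat.add_sub_cancel, e4, mul_pow, pow_add]
      have : Real.exp (-a) ^ m * Real.exp a ^ m = 1 := by rw [← mul_pow, e1, one_pow]
      linear_combination (Real.exp (-a) ^ k * (Real.exp a - 1) ^ k) * this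
    rw [e2, e3]
    calc _ = Real.exp a * (Real.exp (-a) ^ d * Real.exp a ^ d -
          Real.exp (-a) ^ d * (Real.exp a ^ (d - k) * (Real.exp a - 1) ^ k)) := by ring
      _ = Real.exp a * (1 - (1 - Real.exp (-a)) ^ k) := by rw [e5, e6]
      _ = _ := by
        rw [← hg]
        linear_combination (∑ j ∈ Finset.range k, (1 - Real.exp (-a)) ^ j) * e1
  simp only [h]
  have hz : Tendsto (fun a : ℝ => Real.exp (-a)) atTop (nhds 0) :=
    Real.tendsto_exp_neg_atTop_nhds_zero
  have : Tendsto (fun a : ℝ => ∑ j ∈ Finset.range k, (1 - Real.exp (-a)) ^ j) atTop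
      (nhds (∑ j ∈ Finset.range k, (1 - 0) ^ j)) :=
    tendsto_finsetSum _ fun j _ => (tendsto_const_nhds.sub hz).pow j
  simpa using this

lemma err_lim (d : ℕ) (ν : ℝ) (hν : ν < 0) :
    Tendsto (fun a : ℝ => Real.exp (-a * ((d : ℝ) - 1)) *
      (Real.exp (a * d) * Real.exp (ν * (a / 10) ^ 2) +
        3 * Real.exp (a * d - 2 * a + 2 * a * Real.exp (-2) + 2 * a / 5)))
      atTop (nhds 0) := by
  have h : ∀ a : ℝ, Real.exp (-a * ((d : ℝ) - 1)) *
      (Real.exp (a * d) * Real.exp (ν * (a / 10) ^ 2) +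
        3 * Real.exp (a * d - 2 * a + 2 * a * Real.exp (-2) + 2 * a / 5))
      = Real.exp (a * (1 + ν / 100 * a)) + 3 * Real.exp (a * (2 * Real.exp (-2) - 3 / 5)) := by
    intro a
    rw [mul_add, mul_left_comm _ 3, ← Real.exp_add, ← Real.exp_add, ← Real.exp_add]
    congr 2
    · ring
    · congr 1; ring
  simp only [h]
  have he : Real.exp (-2) ≤ 1 / 4 := by
    rw [Real.exp_neg, one_div]
    apply inv_anti₀ (by norm_num)
    have h1 := Real.add_one_le_exp (1 : ℝ)
    have : Real.exp 2 = Real.exp 1 * Real.exp 1 := by rw [← Real.exp_add]; norm_num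
    nlinarith
  have t1 : Tendsto (fun a : ℝ => Real.exp (a * (1 + ν / 100 * a))) atTop (nhds 0) := by
    apply Real.tendsto_exp_atBot.comp
    apply tendsto_id.atTop_mul_atBot₀
    apply tendsto_atBot_add_const_left
    exact tendsto_id.const_mul_atTop_of_neg (by linarith)
  have t2 : Tendsto (fun a : ℝ => Real.exp (a * (2 * Real.exp (-2) - 3 / 5))) atTop (nhds 0) := by
    apply Real.tendsto_exp_atBot.comp
    exact tendsto_id.atTop_mul_const_of_neg (by linarith)
  simpa using t1.add (t2.const_mul 3)

end NumSeries

open NumSeries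

/-- `e^{-a(d-1)} Σ_{n∈ℕ^d} (Π a^{n_i}/n_i!) exp(ν Q_{d-k,d}(n)) → k`,
where `Q_{d-k,d}(n) = Σ_{F⊆{1,…,d-k}} Π_{l∈{1,…,d}∖F} n_l`. -/
theorem numerator_series_limit
    (d k : ℕ) (hd : 3 ≤ d) (hk1 : 1 ≤ k) (hk2 : k ≤ d - 1) (ν : ℝ) (hν : ν < 0) :
    Tendsto (fun a : ℝ =>
        Real.exp (-a * ((d : ℝ) - 1)) *
          ∑' n : Fin d → ℕ,
            (∏ i, a ^ (n i) / ((n i).factorial : ℝ)) *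
              Real.exp (ν *
                ∑ F ∈ (Finset.univ.filter (fun i : Fin d => (i : ℕ) < d - k)).powerset,
                  ∏ l ∈ Finset.univ \ F, (n l : ℝ)))
      atTop (nhds (k : ℝ)) := by
  have hk : k ≤ d := by omega
  simp only [Q_eq]
  have hlo := main_lim d k hk
  have hhi := hlo.add (err_lim d ν hν)
  rw [add_zero] at hhi
  set Q : (Fin d → ℕ) → ℝ := fun n =>
    ∏ l : Fin d, (if (l : ℕ) < d - k then (n l : ℝ) + 1 else n l) with hQ
  set I : (Fin d → ℕ) → ℝ := fun n =>
    ∏ i : Fin d, (if (i : ℕ) < d - k then 1 else if n i = 0 then 0 else 1) with hI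
  have Q0 : ∀ n, 0 ≤ Q n := fun n => Finset.prod_nonneg fun l _ => by split_ifs <;> positivity
  let i0 : Fin d := ⟨0, by omega⟩
  let i1 : Fin d := ⟨1, by omega⟩
  let i2 : Fin d := ⟨2, by omega⟩
  have h01 : i0 ≠ i1 := by simp [i0, i1]
  have h02 : i0 ≠ i2 := by simp [i0, i2]
  have h12 : i1 ≠ i2 := by simp [i1, i2]
  let B : ℝ → (Fin d → ℕ) → ℝ := fun a n => Real.exp (ν * (a / 10) ^ 2)
      + Real.exp (2 * (a / 10 - n i0)) * Real.exp (2 * (a / 10 - n i1))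
      + Real.exp (2 * (a / 10 - n i0)) * Real.exp (2 * (a / 10 - n i2))
      + Real.exp (2 * (a / 10 - n i1)) * Real.exp (2 * (a / 10 - n i2))
  have key : ∀ a : ℝ, 0 ≤ a → ∀ n, 1 - I n ≤ Real.exp (ν * Q n) ∧
      Real.exp (ν * Q n) ≤ 1 - I n + B a n := by
    intro a ha n
    by_cases hz : ∃ l : Fin d, ¬ (l : ℕ) < d - k ∧ n l = 0
    · obtain ⟨l, hl, hn⟩ := hz
      have hq : Q n = 0 := Finset.prod_eq_zero (Finset.mem_univ l) (by simp [hl, hn])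
      have hi : I n = 0 := Finset.prod_eq_zero (Finset.mem_univ l) (by simp [hl, hn])
      have hB : 0 ≤ B a n := by positivity
      rw [hq, hi]; simp [hB]
    · push Not at hz
      have hi : I n = 1 := Finset.prod_eq_one fun l _ => by
        split_ifs with h1 h2
        · rfl
        · exact absurd h2 (hz l (by omega))
        · rfl
      rw [hi]
      refine ⟨by simpa using (Real.exp_pos _).le, ?_⟩
      rw [sub_self, zero_add]
      have hx : ∀ l : Fin d, (1 : ℝ) ≤ (if (l : ℕ) < d - k then (n l : ℝ) + 1 else n l) := by
        intro l
        split_ifs with h1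
        · have : (0 : ℝ) ≤ n l := Nat.cast_nonneg _
          linarith
        · exact_mod_cast Nat.one_le_iff_ne_zero.2 (hz l (by omega))
      have hx' : ∀ l : Fin d, (n l : ℝ) ≤ (if (l : ℕ) < d - k then (n l : ℝ) + 1 else n l) := by
        intro l
        split_ifs with h1 <;> linarith
      exact exp_bound ν (a / 10) hν (by positivity) (Q n) _ _ _ (Q0 n)
        (pair_le_prod d _ hx i0 i1 h01) (pair_le_prod d _ hx i0 i2 h02)
        (pair_le_prod d _ hx i1 i2 h12) _ _ _ (hx' i0) (hx' i1) (hx' i2)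
  have bounds : ∀ a : ℝ, 0 ≤ a → 
      (Real.exp (a * d) - Real.exp a ^ (d - k) * (Real.exp a - 1) ^ k) ≤
        ∑' n : Fin d → ℕ, (∏ i, a ^ (n i) / ((n i).factorial : ℝ)) * Real.exp (ν * Q n) ∧
      ∑' n : Fin d → ℕ, (∏ i, a ^ (n i) / ((n i).factorial : ℝ)) * Real.exp (ν * Q n) ≤
      (Real.exp (a * d) - Real.exp a ^ (d - k) * (Real.exp a - 1) ^ k) +
      (Real.exp (a * d) * Real.exp (ν * (a / 10) ^ 2) +
        3 * Real.exp (a * d - 2 * a + 2 * a * Real.exp (-2) + 2 * a / 5)) := by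
    intro a ha
    have hw0 : ∀ n : Fin d → ℕ, 0 ≤ ∏ i, a ^ (n i) / ((n i).factorial : ℝ) :=
      fun n => Finset.prod_nonneg fun l _ => by positivity
    have s1 := hasSum_w d a ha
    have sL := s1.sub (hasSum_w_ne d k hk a ha)
    have sU := sL.add ((((s1.mul_right (Real.exp (ν * (a / 10) ^ 2))).add
      (hasSum_w_pair d a ha i0 i1 h01)).add (hasSum_w_pair d a ha i0 i2 h02)).add
      (hasSum_w_pair d a ha i1 i2 h12))
    have sS : Summable (fun n : Fin d → ℕ =>
        (∏ i, a ^ (n i) / ((n i).factorial : ℝ)) * Real.exp (ν * Q n)) := by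
      refine Summable.of_nonneg_of_le (fun n => mul_nonneg (hw0 n) (Real.exp_pos _).le)
        (fun n => ?_) s1.summable
      apply mul_le_of_le_one_right (hw0 n)
      rw [Real.exp_le_one_iff]
      nlinarith [Q0 n]
    constructor
    · refine hasSum_le (fun n => ?_) sL sS.hasSum
      have := mul_le_mul_of_nonneg_left (key a ha n).1 (hw0 n)
      simp only [hI] at this
      linarith
    · refine (hasSum_le (fun n => ?_) sS.hasSum sU).trans (le_of_eq (by ring))
      have := mul_le_mul_of_nonneg_left (key a ha n).2 (hw0 n)
      simp only [hI, B] at this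
      linarith
  refine tendsto_of_tendsto_of_tendsto_of_le_of_le' hlo hhi ?_ ?_
  · filter_upwards [eventually_ge_atTop 0] with a ha
    exact mul_le_mul_of_nonneg_left (bounds a ha).1 (Real.exp_pos _).le
  · filter_upwards [eventually_ge_atTop 0] with a ha
    rw [← mul_add]
    exact mul_le_mul_of_nonneg_left (bounds a ha).2 (Real.exp_pos _).le
end
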